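/- Let T1 : 𝕋 → Matrix q₁ p₁ ℂ, T2 : 𝕋 → Matrix q₁ p₂ ℂ, and T3 : 𝕋 → Matrix q₂ p₁ ℂ be continuous. Suppose U_i : 𝕋 → Matrix q₁ p₂ ℂ is continuous, inner, and in H∞, and U_o : 𝕋 → Matrix p₂ p₂ ℂ is continuous, in H∞, pointwise invertible with inverse in H∞, with T2 = U_i·U_o pointwise. Define Y := (I − U_iU_i^∼)T1. Suppose for every γ > ‖Y‖∞ we are given: a continuous pointwise-invertible Y_{o,γ} with Y_{o,γ}, Y_{o,γ}⁻¹ ∈ H∞ and Y_{o,γ}ᴴY_{o,γ} = γ²·I − YᴴY pointwise; a continuous co-inner V_{ci,γ} ∈ H∞ and continuous pointwise-invertible V_{co,γ} with V_{co,γ}, V_{co,γ}⁻¹ ∈ H∞ such that T3·Y_{o,γ}⁻¹ = V_{co,γ}·V_{ci,γ}; and, whenever Z_γ := U_i^∼·T1·Y_{o,γ}⁻¹·(I − V_{ci,γ}^∼V_{ci,γ}) satisfies ‖Z_γ‖∞ < 1, a continuous pointwise-invertible Z_{co,γ} with Z_{co,γ}, Z_{co,γ}⁻¹ ∈ H∞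 and Z_{co,γ}·Z_{co,γ}^∼ = I − Z_γ·Z_γ^∼ pointwise; set R_γ := Z_{co,γ}⁻¹·U_i^∼·T1·Y_{o,γ}⁻¹·V_{ci,γ}^∼. Then inf{‖T1 − T2·Q·T3‖∞ : Q : 𝕋 → Matrix p₂ q₂ ℂ continuous, Q ∈ H∞} = inf{γ : γ > ‖Y‖∞, ‖Z_γ‖∞ < 1, and dist(R_γ, H∞) < 1}. -/

import Mathlib

open Matrix

/-- The spectral norm (ℓ²→ℓ² operator norm, largest singular value) of a complex matrix. -/
noncomputable def specNorm {m n : Type*} [Fintype m] [Fintype n] [DecidableEq n]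
    (M : Matrix m n ℂ) : ℝ :=
  ‖LinearMap.toContinuousLinearMap (Matrix.toEuclideanLin M)‖

/-- The `H∞` norm of a matrix-valued function on the unit circle:
`‖F‖∞ = sup_{z ∈ 𝕋} ‖F(z)‖`. -/
noncomputable def hinfNorm {m n : Type*} [Fintype m] [Fintype n] [DecidableEq n]
    (F : Circle → Matrix m n ℂ) : ℝ :=
  ⨆ z : Circle, specNorm (F z)

/-- A matrix-valued function `F` on the unit circle belongs to `H∞` if there is a
matrix-valued function `G`, continuous on the closed unit disc and analytic on the open
unit disc, with `F(z) = G(z⁻¹)` for all `z` on the circle. -/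
def MemHInf {m n : Type*} (F : Circle → Matrix m n ℂ) : Prop :=
  ∃ G : ℂ → Matrix m n ℂ,
    (∀ i j, ContinuousOn (fun w => G w i j) (Metric.closedBall (0 : ℂ) 1)) ∧
    (∀ i j, AnalyticOn ℂ (fun w => G w i j) (Metric.ball (0 : ℂ) 1)) ∧
    (∀ z : Circle, F z = G ((z : ℂ)⁻¹))

/-- The distance from `R` to `H∞` in the `‖·‖∞` norm:
`dist(R, H∞) = inf { ‖R − X‖∞ : X continuous, X ∈ H∞ }`. -/
noncomputable def distHInf {m n : Type*} [Fintype m] [Fintype n] [DecidableEq n]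
    (R : Circle → Matrix m n ℂ) : ℝ :=
  sInf {c : ℝ | ∃ X : Circle → Matrix m n ℂ,
    Continuous X ∧ MemHInf X ∧ c = hinfNorm fun z => R z - X z}

noncomputable def vsq {n : ℕ} (v : Fin n → ℂ) : ℝ := ‖WithLp.toLp 2 v‖ ^ 2

theorem vsq_nonneg {n : ℕ} (v : Fin n → ℂ) : 0 ≤ vsq v := by unfold vsq; positivity

theorem vsq_eq {n : ℕ} (v : Fin n → ℂ) : ((vsq v : ℝ) : ℂ) = star v ⬝ᵥ v := by
  unfold vsq
  rw [EuclideanSpace.norm_sq_eq]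
  simp only [dotProduct, Pi.star_apply, RCLike.star_def]
  push_cast
  refine Finset.sum_congr rfl fun i _ => ?_
  rw [← Complex.conj_mul']

theorem vsq_mulVec {m n : ℕ} (M : Matrix (Fin m) (Fin n) ℂ) (v : Fin n → ℂ) :
    ((vsq (M *ᵥ v) : ℝ) : ℂ) = star v ⬝ᵥ ((Mᴴ * M) *ᵥ v) := by
  rw [vsq_eq, star_mulVec, ← mulVec_mulVec, dotProduct_mulVec, dotProduct_mulVec,
    dotProduct_mulVec]

theorem specNorm_nonneg {m n : ℕ} (M : Matrix (Fin m) (Fin n) ℂ) : 0 ≤ specNorm M :=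
  norm_nonneg _

theorem vsq_le_of_specNorm {m n : ℕ} {M : Matrix (Fin m) (Fin n) ℂ} {c : ℝ}
    (h : specNorm M ≤ c) (v : Fin n → ℂ) : vsq (M *ᵥ v) ≤ c ^ 2 * vsq v := by
  unfold vsq
  rw [← mul_pow]
  have := (LinearMap.toContinuousLinearMap (Matrix.toEuclideanLin M)).le_of_opNorm_le h
    (WithLp.toLp 2 v)
  exact pow_le_pow_left₀ (norm_nonneg _) this 2

theorem specNorm_le_of_vsq {m n : ℕ} {M : Matrix (Fin m) (Fin n) ℂ} {c : ℝ} (hc : 0 ≤ c)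
    (h : ∀ v : Fin n → ℂ, vsq (M *ᵥ v) ≤ c ^ 2 * vsq v) : specNorm M ≤ c := by
  refine ContinuousLinearMap.opNorm_le_bound _ hc fun x => ?_
  have := h x.ofLp
  unfold vsq at this
  rw [← mul_pow] at this
  exact le_of_sq_le_sq this (by positivity)

open scoped Matrix.Norms.L2Operator in
theorem specNorm_eq {m n : ℕ} (M : Matrix (Fin m) (Fin n) ℂ) : specNorm M = ‖M‖ := rfl

open scoped Matrix.Norms.L2Operator in
theorem specNorm_conjTranspose {m n : ℕ} (M : Matrix (Fin m) (Fin n) ℂ) :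
    specNorm Mᴴ = specNorm M := by
  rw [specNorm_eq, specNorm_eq, Matrix.l2_opNorm_conjTranspose]

open scoped Matrix.Norms.L2Operator in
theorem continuous_specNorm {m n : ℕ} :
    Continuous (fun M : Matrix (Fin m) (Fin n) ℂ => specNorm M) := by
  simp only [specNorm_eq]
  exact continuous_norm

theorem bdd_specNorm {m n : ℕ} {F : Circle → Matrix (Fin m) (Fin n) ℂ} (hF : Continuous F) :
    BddAbove (Set.range fun z => specNorm (F z)) :=
  isCompact_range (continuous_specNorm.comp hF) |>.bddAbove

theorem specNorm_le_hinfNorm {m n : ℕ} {F : Circle → Matrix (Fin m) (Fin n) ℂ}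
    (hF : Continuous F) (z : Circle) : specNorm (F z) ≤ hinfNorm F :=
  le_ciSup (bdd_specNorm hF) z

theorem hinfNorm_le {m n : ℕ} {F : Circle → Matrix (Fin m) (Fin n) ℂ} {c : ℝ}
    (h : ∀ z, specNorm (F z) ≤ c) : hinfNorm F ≤ c := ciSup_le h

theorem hinfNorm_nonneg {m n : ℕ} (F : Circle → Matrix (Fin m) (Fin n) ℂ) : 0 ≤ hinfNorm F :=
  Real.iSup_nonneg fun _ => specNorm_nonneg _

theorem MemHInf.cont {m n : ℕ} {F : Circle → Matrix (Fin m) (Fin n) ℂ} (h : MemHInf F) :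
    Continuous F := by
  obtain ⟨G, hG, -, hF⟩ := h
  refine continuous_matrix fun i j => ?_
  have : (fun z => F z i j) = fun z : Circle => G (((z⁻¹ : Circle) : ℂ)) i j := by
    funext z; rw [hF z, Circle.coe_inv]
  rw [this]
  refine (hG i j).comp_continuous (by fun_prop) fun z => ?_
  rw [mem_closedBall_zero_iff, Circle.norm_coe]

theorem MemHInf.mul {m n k : ℕ} {F : Circle → Matrix (Fin m) (Fin n) ℂ}
    {F' : Circle → Matrix (Fin n) (Fin k) ℂ} (h : MemHInf F) (h' : MemHInf F') :
    MemHInf fun z => F z * F' z := by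
  obtain ⟨G, hc, ha, hF⟩ := h
  obtain ⟨G', hc', ha', hF'⟩ := h'
  refine ⟨fun w => G w * G' w, fun i j => ?_, fun i j => ?_, fun z => by simp only [hF, hF']⟩
  · simp only [Matrix.mul_apply]
    exact continuousOn_finsetSum _ fun l _ => (hc i l).mul (hc' l j)
  · simp only [Matrix.mul_apply]
    exact Finset.analyticOn_fun_sum _ fun l _ => (ha i l).mul (ha' l j)

theorem memHInf_zero {m n : ℕ} : MemHInf (fun _ : Circle => (0 : Matrix (Fin m) (Fin n) ℂ)) :=
  ⟨fun _ => 0, fun _ _ => continuousOn_const, fun _ _ => analyticOn_const, fun _ => rfl⟩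

theorem decomp {a b c : ℕ} (U : Matrix (Fin a) (Fin b) ℂ) (E : Matrix (Fin a) (Fin c) ℂ)
    (hU : Uᴴ * U = 1) :
    Eᴴ * E = ((1 - U * Uᴴ) * E)ᴴ * ((1 - U * Uᴴ) * E) + (Uᴴ * E)ᴴ * (Uᴴ * E) := by
  have h1 : U * Uᴴ * (U * Uᴴ) = U * Uᴴ := by
    rw [Matrix.mul_assoc, ← Matrix.mul_assoc Uᴴ, hU, Matrix.one_mul]
  have h2 : (1 - U * Uᴴ)ᴴ * (1 - U * Uᴴ) = 1 - U * Uᴴ := by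
    simp only [conjTranspose_sub, conjTranspose_one, conjTranspose_mul, conjTranspose_conjTranspose,
      Matrix.sub_mul, Matrix.mul_sub, h1, Matrix.one_mul, Matrix.mul_one]
    abel
  rw [conjTranspose_mul, Matrix.mul_assoc Eᴴ, ← Matrix.mul_assoc _ _ E, h2, conjTranspose_mul,
    conjTranspose_conjTranspose]
  simp only [Matrix.sub_mul, Matrix.mul_sub, Matrix.one_mul, Matrix.mul_assoc]
  abel

theorem vsq_decomp {a b c : ℕ} (U : Matrix (Fin a) (Fin b) ℂ) (E : Matrix (Fin a) (Fin c) ℂ)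
    (hU : Uᴴ * U = 1) (v : Fin c → ℂ) :
    vsq (E *ᵥ v) = vsq (((1 - U * Uᴴ) * E) *ᵥ v) + vsq ((Uᴴ * E) *ᵥ v) := by
  have : ((vsq (E *ᵥ v) : ℝ) : ℂ) =
      ((vsq (((1 - U * Uᴴ) * E) *ᵥ v) + vsq ((Uᴴ * E) *ᵥ v) : ℝ) : ℂ) := by
    rw [Complex.ofReal_add, vsq_mulVec, vsq_mulVec, vsq_mulVec, decomp U E hU, add_mulVec,
      dotProduct_add]
  exact_mod_cast this

theorem vsq_outer {a c : ℕ} (Y : Matrix (Fin a) (Fin c) ℂ) (Yo : Matrix (Fin c) (Fin c) ℂ) (γ : ℝ)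
    (h : Yoᴴ * Yo = ((γ : ℂ) ^ 2) • (1 : Matrix (Fin c) (Fin c) ℂ) - Yᴴ * Y) (v : Fin c → ℂ) :
    vsq (Yo *ᵥ v) = γ ^ 2 * vsq v - vsq (Y *ᵥ v) := by
  have : ((vsq (Yo *ᵥ v) : ℝ) : ℂ) = ((γ ^ 2 * vsq v - vsq (Y *ᵥ v) : ℝ) : ℂ) := by
    push_cast
    rw [vsq_mulVec, vsq_mulVec, vsq_eq, h, sub_mulVec, dotProduct_sub, smul_mulVec, one_mulVec,
      dotProduct_smul, smul_eq_mul]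
  exact_mod_cast this

theorem specNorm_proj_le {a b c : ℕ} (U : Matrix (Fin a) (Fin b) ℂ) (E : Matrix (Fin a) (Fin c) ℂ)
    (hU : Uᴴ * U = 1) : specNorm ((1 - U * Uᴴ) * E) ≤ specNorm E := by
  refine specNorm_le_of_vsq (specNorm_nonneg _) fun v => ?_
  have h1 := vsq_decomp U E hU v
  have h2 := vsq_le_of_specNorm (le_refl (specNorm E)) v
  have h3 := vsq_nonneg ((Uᴴ * E) *ᵥ v)
  linarith

theorem key_fwd {a b c : ℕ} (U : Matrix (Fin a) (Fin b) ℂ) (E Y : Matrix (Fin a) (Fin c) ℂ)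
    (Yo : Matrix (Fin c) (Fin c) ℂ) (γ δ : ℝ) (hU : Uᴴ * U = 1) (hY : (1 - U * Uᴴ) * E = Y)
    (hYo : Yoᴴ * Yo = ((γ : ℂ) ^ 2) • (1 : Matrix (Fin c) (Fin c) ℂ) - Yᴴ * Y)
    (hunit : IsUnit Yo) (hγ : 0 < γ) (hδ : 0 ≤ δ) (hδγ : δ ≤ γ) (hE : specNorm E ≤ δ) :
    specNorm (Uᴴ * E * Yo⁻¹) ≤ δ / γ := by
  refine specNorm_le_of_vsq (by positivity) fun w => ?_
  set v := Yo⁻¹ *ᵥ w with hv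
  have hw : Yo *ᵥ v = w := by
    rw [hv, mulVec_mulVec, Matrix.mul_nonsing_inv _ ((Matrix.isUnit_iff_isUnit_det _).1 hunit),
      one_mulVec]
  rw [← mulVec_mulVec, ← hv, ← hw]
  have h1 := vsq_decomp U E hU v
  rw [hY] at h1
  have h2 := vsq_outer Y Yo γ hYo v
  have h3 := vsq_le_of_specNorm hE v
  have h4 := vsq_nonneg (Y *ᵥ v)
  rw [div_pow, div_mul_eq_mul_div, le_div_iff₀ (by positivity)]
  have h5 : vsq ((Uᴴ * E) *ᵥ v) ≤ δ ^ 2 * vsq v - vsq (Y *ᵥ v) := by linarith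
  have h6 : δ ^ 2 ≤ γ ^ 2 := pow_le_pow_left₀ hδ hδγ 2
  rw [h2]
  nlinarith [mul_le_mul_of_nonneg_right h5 (sq_nonneg γ), mul_le_mul_of_nonneg_right h6 h4]

theorem key_bwd {a b c : ℕ} (U : Matrix (Fin a) (Fin b) ℂ) (E Y : Matrix (Fin a) (Fin c) ℂ)
    (Yo : Matrix (Fin c) (Fin c) ℂ) (γ : ℝ) (hU : Uᴴ * U = 1) (hY : (1 - U * Uᴴ) * E = Y)
    (hYo : Yoᴴ * Yo = ((γ : ℂ) ^ 2) • (1 : Matrix (Fin c) (Fin c) ℂ) - Yᴴ * Y)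
    (hunit : IsUnit Yo) (hγ : 0 < γ) (h : specNorm (Uᴴ * E * Yo⁻¹) ≤ 1) :
    specNorm E ≤ γ := by
  refine specNorm_le_of_vsq hγ.le fun v => ?_
  have h1 := vsq_decomp U E hU v
  rw [hY] at h1
  have h2 := vsq_outer Y Yo γ hYo v
  have h3 := vsq_le_of_specNorm h (Yo *ᵥ v)
  rw [mulVec_mulVec, Matrix.mul_assoc (Uᴴ * E),
    Matrix.nonsing_inv_mul _ ((Matrix.isUnit_iff_isUnit_det _).1 hunit), Matrix.mul_one] at h3
  linarith

/-- the combined pointwise step for `Zco`, by conjugate transposition -/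
theorem dual_outer {b c : ℕ} (Z : Matrix (Fin b) (Fin c) ℂ) (Zo : Matrix (Fin b) (Fin b) ℂ)
    (h : Zo * Zoᴴ = 1 - Z * Zᴴ) :
    (Zoᴴ)ᴴ * Zoᴴ = (((1 : ℝ) : ℂ) ^ 2) • (1 : Matrix (Fin b) (Fin b) ℂ) - (Zᴴ)ᴴ * Zᴴ := by
  simp [h]

theorem dual_proj {b c d : ℕ} (V : Matrix (Fin d) (Fin c) ℂ) (W : Matrix (Fin b) (Fin c) ℂ) :
    (1 - Vᴴ * (Vᴴ)ᴴ) * Wᴴ = (W * (1 - Vᴴ * V))ᴴ := by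
  simp [conjTranspose_mul]

theorem dual_norm {b c d : ℕ} (V : Matrix (Fin d) (Fin c) ℂ) (W : Matrix (Fin b) (Fin c) ℂ)
    (Zo : Matrix (Fin b) (Fin b) ℂ) :
    specNorm ((Vᴴ)ᴴ * Wᴴ * (Zoᴴ)⁻¹) = specNorm (Zo⁻¹ * (W * Vᴴ)) := by
  rw [← specNorm_conjTranspose]
  simp [conjTranspose_mul, conjTranspose_nonsing_inv]

theorem key_fwd_dual {b c d : ℕ} (V : Matrix (Fin d) (Fin c) ℂ) (W Z : Matrix (Fin b) (Fin c) ℂ)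
    (Zo : Matrix (Fin b) (Fin b) ℂ) (δ : ℝ) (hV : V * Vᴴ = 1) (hZ : W * (1 - Vᴴ * V) = Z)
    (hZo : Zo * Zoᴴ = 1 - Z * Zᴴ) (hunit : IsUnit Zo) (hδ : 0 ≤ δ) (hδ1 : δ ≤ 1)
    (hW : specNorm W ≤ δ) : specNorm (Zo⁻¹ * (W * Vᴴ)) ≤ δ := by
  have := key_fwd Vᴴ Wᴴ Zᴴ Zoᴴ 1 δ (by simpa using hV) (by rw [dual_proj, hZ])
    (dual_outer Z Zo hZo) ((Matrix.isUnit_conjTranspose _).2 hunit) one_pos hδ hδ1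
    (by rwa [specNorm_conjTranspose])
  rwa [dual_norm, div_one] at this

theorem key_bwd_dual {b c d : ℕ} (V : Matrix (Fin d) (Fin c) ℂ) (W Z : Matrix (Fin b) (Fin c) ℂ)
    (Zo : Matrix (Fin b) (Fin b) ℂ) (hV : V * Vᴴ = 1) (hZ : W * (1 - Vᴴ * V) = Z)
    (hZo : Zo * Zoᴴ = 1 - Z * Zᴴ) (hunit : IsUnit Zo)
    (h : specNorm (Zo⁻¹ * (W * Vᴴ)) ≤ 1) : specNorm W ≤ 1 := by
  rw [← specNorm_conjTranspose]
  exact key_bwd Vᴴ Wᴴ Zᴴ Zoᴴ 1 (by simpa using hV) (by rw [dual_proj, hZ])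
    (dual_outer Z Zo hZo) ((Matrix.isUnit_conjTranspose _).2 hunit) one_pos
    (by rwa [dual_norm])

theorem specNorm_proj_right_le {b c d : ℕ} (V : Matrix (Fin d) (Fin c) ℂ)
    (W : Matrix (Fin b) (Fin c) ℂ) (hV : V * Vᴴ = 1) :
    specNorm (W * (1 - Vᴴ * V)) ≤ specNorm W := by
  rw [← specNorm_conjTranspose, ← dual_proj, ← specNorm_conjTranspose W]
  exact specNorm_proj_le _ _ (by simpa using hV)

/-- "1984" H∞ control, general `T3` case (Theorem 2, part 1):
`inf { ‖T1 − T2 Q T3‖∞ : Q ∈ H∞ }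
  = inf { γ : γ > ‖Y‖∞, ‖Z_γ‖∞ < 1, dist(R_γ, H∞) < 1 }`. -/
theorem hinf_1984_general_optimal (q1 q2 p1 p2 : ℕ)
    (T1 : Circle → Matrix (Fin q1) (Fin p1) ℂ) (hT1 : Continuous T1)
    (T2 : Circle → Matrix (Fin q1) (Fin p2) ℂ) (hT2 : Continuous T2)
    (T3 : Circle → Matrix (Fin q2) (Fin p1) ℂ) (hT3 : Continuous T3)
    (Ui : Circle → Matrix (Fin q1) (Fin p2) ℂ) (hUic : Continuous Ui)
    (hUiInner : ∀ z, (Ui z)ᴴ * Ui z = 1) (hUiH : MemHInf Ui)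
    (Uo : Circle → Matrix (Fin p2) (Fin p2) ℂ) (hUoc : Continuous Uo)
    (hUoH : MemHInf Uo) (hUoUnit : ∀ z, IsUnit (Uo z))
    (hUoInvH : MemHInf fun z => (Uo z)⁻¹)
    (hT2fact : ∀ z, T2 z = Ui z * Uo z)
    (Y : Circle → Matrix (Fin q1) (Fin p1) ℂ)
    (hY : Y = fun z => (1 - Ui z * (Ui z)ᴴ) * T1 z)
    (Yo : ℝ → Circle → Matrix (Fin p1) (Fin p1) ℂ)
    (hYoc : ∀ γ, hinfNorm Y < γ → Continuous (Yo γ))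
    (hYoUnit : ∀ γ, hinfNorm Y < γ → ∀ z, IsUnit (Yo γ z))
    (hYoH : ∀ γ, hinfNorm Y < γ → MemHInf (Yo γ))
    (hYoInvH : ∀ γ, hinfNorm Y < γ → MemHInf fun z => (Yo γ z)⁻¹)
    (hYofact : ∀ γ, hinfNorm Y < γ → ∀ z, (Yo γ z)ᴴ * Yo γ z
      = ((γ : ℂ) ^ 2) • (1 : Matrix (Fin p1) (Fin p1) ℂ) - (Y z)ᴴ * Y z)
    (Vci : ℝ → Circle → Matrix (Fin q2) (Fin p1) ℂ)
    (hVcic : ∀ γ, hinfNorm Y < γ → Continuous (Vci γ))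
    (hVciH : ∀ γ, hinfNorm Y < γ → MemHInf (Vci γ))
    (hVciCoInner : ∀ γ, hinfNorm Y < γ → ∀ z, Vci γ z * (Vci γ z)ᴴ = 1)
    (Vco : ℝ → Circle → Matrix (Fin q2) (Fin q2) ℂ)
    (hVcoc : ∀ γ, hinfNorm Y < γ → Continuous (Vco γ))
    (hVcoH : ∀ γ, hinfNorm Y < γ → MemHInf (Vco γ))
    (hVcoUnit : ∀ γ, hinfNorm Y < γ → ∀ z, IsUnit (Vco γ z))
    (hVcoInvH : ∀ γ, hinfNorm Y < γ → MemHInf fun z => (Vco γ z)⁻¹)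
    (hT3fact : ∀ γ, hinfNorm Y < γ → ∀ z, T3 z * (Yo γ z)⁻¹ = Vco γ z * Vci γ z)
    (Z : ℝ → Circle → Matrix (Fin p2) (Fin p1) ℂ)
    (hZ : Z = fun γ z => (Ui z)ᴴ * T1 z * (Yo γ z)⁻¹ * (1 - (Vci γ z)ᴴ * Vci γ z))
    (Zco : ℝ → Circle → Matrix (Fin p2) (Fin p2) ℂ)
    (hZcoc : ∀ γ, hinfNorm Y < γ → hinfNorm (Z γ) < 1 → Continuous (Zco γ))
    (hZcoUnit : ∀ γ, hinfNorm Y < γ → hinfNorm (Z γ) < 1 → ∀ z, IsUnit (Zco γ z))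
    (hZcoH : ∀ γ, hinfNorm Y < γ → hinfNorm (Z γ) < 1 → MemHInf (Zco γ))
    (hZcoInvH : ∀ γ, hinfNorm Y < γ → hinfNorm (Z γ) < 1 →
      MemHInf fun z => (Zco γ z)⁻¹)
    (hZcofact : ∀ γ, hinfNorm Y < γ → hinfNorm (Z γ) < 1 → ∀ z, Zco γ z * (Zco γ z)ᴴ
      = (1 : Matrix (Fin p2) (Fin p2) ℂ) - Z γ z * (Z γ z)ᴴ)
    (R : ℝ → Circle → Matrix (Fin p2) (Fin q2) ℂ)
    (hR : R = fun γ z => (Zco γ z)⁻¹ * (Ui z)ᴴ * T1 z * (Yo γ z)⁻¹ * (Vci γ z)ᴴ) :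
    sInf {c : ℝ | ∃ Q : Circle → Matrix (Fin p2) (Fin q2) ℂ,
        Continuous Q ∧ MemHInf Q ∧ c = hinfNorm fun z => T1 z - T2 z * Q z * T3 z}
      = sInf {γ : ℝ | hinfNorm Y < γ ∧ hinfNorm (Z γ) < 1 ∧ distHInf (R γ) < 1} := by
  -- pointwise algebra
  have projU : ∀ z, (1 - Ui z * (Ui z)ᴴ) * Ui z = 0 := fun z => by
    rw [Matrix.sub_mul, Matrix.mul_assoc, hUiInner, Matrix.one_mul, Matrix.mul_one, sub_self]
  have projE : ∀ (Q : Circle → Matrix (Fin p2) (Fin q2) ℂ) z,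
      (1 - Ui z * (Ui z)ᴴ) * (T1 z - T2 z * Q z * T3 z) = Y z := fun Q z => by
    rw [Matrix.mul_sub, hT2fact, Matrix.mul_assoc, Matrix.mul_assoc, ← Matrix.mul_assoc _ (Ui z),
      projU, Matrix.zero_mul, sub_zero, hY]
  have hW : ∀ γ, hinfNorm Y < γ → ∀ (Q : Circle → Matrix (Fin p2) (Fin q2) ℂ) z,
      (Ui z)ᴴ * (T1 z - T2 z * Q z * T3 z) * (Yo γ z)⁻¹
        = (Ui z)ᴴ * T1 z * (Yo γ z)⁻¹ - Uo z * Q z * Vco γ z * Vci γ z := fun γ hγ Q z => by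
    rw [Matrix.mul_sub, Matrix.sub_mul, Matrix.mul_assoc (Uo z * Q z), ← hT3fact γ hγ, hT2fact]
    simp only [Matrix.mul_assoc]
    rw [← Matrix.mul_assoc (Ui z)ᴴ (Ui z), hUiInner, Matrix.one_mul]
  have projV : ∀ γ, hinfNorm Y < γ → ∀ z, Vci γ z * (1 - (Vci γ z)ᴴ * Vci γ z) = 0 :=
    fun γ hγ z => by
      rw [Matrix.mul_sub, ← Matrix.mul_assoc, hVciCoInner γ hγ, Matrix.one_mul, Matrix.mul_one,
        sub_self]
  have projW : ∀ γ, hinfNorm Y < γ → ∀ (K : Matrix (Fin p2) (Fin q2) ℂ) z,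
      ((Ui z)ᴴ * T1 z * (Yo γ z)⁻¹ - K * Vci γ z) * (1 - (Vci γ z)ᴴ * Vci γ z) = Z γ z :=
    fun γ hγ K z => by
      rw [Matrix.sub_mul, Matrix.mul_assoc K, projV γ hγ, Matrix.mul_zero, sub_zero, hZ]
  have hRW : ∀ γ, hinfNorm Y < γ → ∀ (K : Matrix (Fin p2) (Fin q2) ℂ) z,
      (Zco γ z)⁻¹ * (((Ui z)ᴴ * T1 z * (Yo γ z)⁻¹ - K * Vci γ z) * (Vci γ z)ᴴ)
        = R γ z - (Zco γ z)⁻¹ * K := fun γ hγ K z => by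
    rw [Matrix.sub_mul, Matrix.mul_assoc K, hVciCoInner γ hγ, Matrix.mul_one, Matrix.mul_sub, hR]
    simp only [Matrix.mul_assoc]
  have hEc : ∀ Q : Circle → Matrix (Fin p2) (Fin q2) ℂ, Continuous Q →
      Continuous fun z => T1 z - T2 z * Q z * T3 z := fun Q hQ =>
    hT1.sub ((hT2.matrix_mul hQ).matrix_mul hT3)
  have bddD : ∀ γ, BddBelow {c : ℝ | ∃ X : Circle → Matrix (Fin p2) (Fin q2) ℂ,
      Continuous X ∧ MemHInf X ∧ c = hinfNorm fun z => R γ z - X z} := fun γ =>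
    ⟨0, by rintro c ⟨X, -, -, rfl⟩; exact hinfNorm_nonneg _⟩
  have hRc : ∀ γ, hinfNorm Y < γ → hinfNorm (Z γ) < 1 → Continuous (R γ) := fun γ h1 h2 => by
    rw [hR]
    exact ((((hZcoInvH γ h1 h2).cont.matrix_mul hUic.matrix_conjTranspose).matrix_mul
      hT1).matrix_mul (hYoInvH γ h1).cont).matrix_mul (hVcic γ h1).matrix_conjTranspose
  -- forward direction
  have fwd : ∀ Q : Circle → Matrix (Fin p2) (Fin q2) ℂ, Continuous Q → MemHInf Q → ∀ γ,
      (hinfNorm fun z => T1 z - T2 z * Q z * T3 z) < γ →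
      hinfNorm Y < γ ∧ hinfNorm (Z γ) < 1 ∧ distHInf (R γ) < 1 := by
    intro Q hQ hQH γ hc
    set c := hinfNorm fun z => T1 z - T2 z * Q z * T3 z with hcdef
    have hc0 : 0 ≤ c := hinfNorm_nonneg _
    have hγ0 : 0 < γ := hc0.trans_lt hc
    have hEz : ∀ z, specNorm (T1 z - T2 z * Q z * T3 z) ≤ c := specNorm_le_hinfNorm (hEc Q hQ)
    have hYγ : hinfNorm Y < γ := by
      refine lt_of_le_of_lt (hinfNorm_le fun z => ?_) hc
      rw [← projE Q z]
      exact (specNorm_proj_le _ _ (hUiInner z)).trans (hEz z)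
    have hδ0 : 0 ≤ c / γ := by positivity
    have hδ1 : c / γ < 1 := (div_lt_one hγ0).2 hc
    have hWz : ∀ z, specNorm ((Ui z)ᴴ * T1 z * (Yo γ z)⁻¹ - Uo z * Q z * Vco γ z * Vci γ z)
        ≤ c / γ := fun z => by
      rw [← hW γ hYγ]
      exact key_fwd _ _ _ _ γ c (hUiInner z) (projE Q z) (hYofact γ hYγ z) (hYoUnit γ hYγ z)
        hγ0 hc0 hc.le (hEz z)
    have hZγ : hinfNorm (Z γ) < 1 := by
      refine lt_of_le_of_lt (hinfNorm_le fun z => ?_) hδ1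
      rw [← projW γ hYγ (Uo z * Q z * Vco γ z) z]
      exact (specNorm_proj_right_le _ _ (hVciCoInner γ hYγ z)).trans (hWz z)
    refine ⟨hYγ, hZγ, ?_⟩
    have hX : MemHInf fun z => (Zco γ z)⁻¹ * (Uo z * Q z * Vco γ z) :=
      (hZcoInvH γ hYγ hZγ).mul ((hUoH.mul hQH).mul (hVcoH γ hYγ))
    refine lt_of_le_of_lt (csInf_le (bddD γ) ⟨_, hX.cont, hX, rfl⟩) ?_
    refine lt_of_le_of_lt (hinfNorm_le fun z => ?_) hδ1
    rw [← hRW γ hYγ]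
    exact key_fwd_dual _ _ _ _ _ (hVciCoInner γ hYγ z) (projW γ hYγ _ z)
      (hZcofact γ hYγ hZγ z) (hZcoUnit γ hYγ hZγ z) hδ0 hδ1.le (hWz z)
  -- backward direction
  have bwd : ∀ γ, hinfNorm Y < γ → hinfNorm (Z γ) < 1 → distHInf (R γ) < 1 →
      ∃ Q : Circle → Matrix (Fin p2) (Fin q2) ℂ, Continuous Q ∧ MemHInf Q ∧
        (hinfNorm fun z => T1 z - T2 z * Q z * T3 z) ≤ γ := by
    intro γ hYγ hZγ hd
    obtain ⟨_, ⟨X, hXc, hXH, rfl⟩, hX1⟩ := exists_lt_of_csInf_lt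
      (s := {c : ℝ | ∃ X : Circle → Matrix (Fin p2) (Fin q2) ℂ,
        Continuous X ∧ MemHInf X ∧ c = hinfNorm fun z => R γ z - X z})
      ⟨hinfNorm fun z => R γ z - 0, fun _ => 0, continuous_const, memHInf_zero, rfl⟩ hd
    have hγ0 : 0 < γ := (hinfNorm_nonneg Y).trans_lt hYγ
    have hQH : MemHInf fun z => (Uo z)⁻¹ * (Zco γ z * X z) * (Vco γ z)⁻¹ :=
      (hUoInvH.mul ((hZcoH γ hYγ hZγ).mul hXH)).mul (hVcoInvH γ hYγ)
    refine ⟨_, hQH.cont, hQH, hinfNorm_le fun z => ?_⟩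
    have hQz : Uo z * ((Uo z)⁻¹ * (Zco γ z * X z) * (Vco γ z)⁻¹) * Vco γ z = Zco γ z * X z := by
      rw [Matrix.mul_assoc, Matrix.mul_assoc ((Uo z)⁻¹ * _),
        Matrix.nonsing_inv_mul _ ((Matrix.isUnit_iff_isUnit_det _).1 (hVcoUnit γ hYγ z)),
        Matrix.mul_one, ← Matrix.mul_assoc,
        Matrix.mul_nonsing_inv _ ((Matrix.isUnit_iff_isUnit_det _).1 (hUoUnit z)), Matrix.one_mul]
    refine key_bwd _ _ _ _ γ (hUiInner z)
      (projE (fun z => (Uo z)⁻¹ * (Zco γ z * X z) * (Vco γ z)⁻¹) z) (hYofact γ hYγ z)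
      (hYoUnit γ hYγ z) hγ0 ?_
    rw [hW γ hYγ (fun z => (Uo z)⁻¹ * (Zco γ z * X z) * (Vco γ z)⁻¹) z]
    simp only [hQz]
    refine key_bwd_dual _ _ _ _ (hVciCoInner γ hYγ z) (projW γ hYγ _ z)
      (hZcofact γ hYγ hZγ z) (hZcoUnit γ hYγ hZγ z) ?_
    rw [hRW γ hYγ, ← Matrix.mul_assoc,
      Matrix.nonsing_inv_mul _ ((Matrix.isUnit_iff_isUnit_det _).1 (hZcoUnit γ hYγ hZγ z)),
      Matrix.one_mul]
    exact (specNorm_le_hinfNorm ((hRc γ hYγ hZγ).sub hXc) z).trans hX1.le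
  apply le_antisymm
  · refine le_csInf ?_ ?_
    · exact ⟨_, fwd (fun _ => 0) continuous_const memHInf_zero _ (lt_add_one _)⟩
    · rintro γ ⟨h1, h2, h3⟩
      obtain ⟨Q, hQ, hQH, hle⟩ := bwd γ h1 h2 h3
      refine le_trans (csInf_le ?_ ⟨Q, hQ, hQH, rfl⟩) hle
      exact ⟨0, by rintro c ⟨X, -, -, rfl⟩; exact hinfNorm_nonneg _⟩
  · refine le_csInf ?_ ?_
    · exact ⟨hinfNorm fun z => T1 z - T2 z * 0 * T3 z, fun _ => 0, continuous_const,
        memHInf_zero, rfl⟩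
    rintro c ⟨Q, hQ, hQH, rfl⟩
    refine le_of_forall_gt_imp_ge_of_dense fun γ hγ => ?_
    exact csInf_le ⟨hinfNorm Y, fun x hx => hx.1.le⟩ (fwd Q hQ hQH γ hγ)
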